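/- Let α > 0, let ν be a probability measure on [0,∞) with continuous cumulative distribution function F, and set G(t) = ∫_{[0,∞)} (1 − x^α/t^α)_+ ν(dx) for t > 0. For n, k ≥ 1 let μ_n and μ_k be probability measures on [0,∞), atomless on (0,∞), with continuous cumulative distribution functions F_n and F_k, satisfying ∫ (1 − x^α/t^α)_+ μ_n(dx) = G(t)^n and ∫ (1 − x^α/t^α)_+ μ_k(dx) = G(t)^k for all t > 0. Then for all 0 < s < t: ∫_{[0,s)} ∫_{[0,t)} (1 − x^α y^α / t^{2α}) μ_n(dx) μ_k(dy) = F_n(t) F_k(s) − (s^α/t^α) (F_n(t) − G(t)^n)(F_k(s) − G(s)^k). (The left-hand side equals P(S_{n+k} < t, S_k < s) for the Kendall random walk with step distribution ν.) -/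

import Mathlib

/-!
On `[0, t)` the positive part in the Kendall transform is inactive, and it vanishes on `[t, ∞)`.
Hence the transform at `t` equals `μ [0, t) - t^{-α} ∫_{[0,t)} x^α dμ`, which expresses the
truncated `α`-moment through the distribution function and the transform. The integrand
`1 - x^α y^α / t^{2α}` is affine in `x^α` and in `y^α`, so its iterated integral is the product of
the masses minus `t^{-2α}` times the product of the two truncated moments.
-/

open MeasureTheory

open Set

/-- The Kendall transform `t ↦ ∫ (1 - x^α / t^α)₊ μ(dx)`, which turns Kendall convolution of
measures on `[0, ∞)` into multiplication. It is encoded for measures on all of `ℝ`; support in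
`[0, ∞)` is a hypothesis of the lemmas. At `t = 0` division by zero makes it a junk value when
`α ≠ 0`. -/
noncomputable def kendallTransform (α : ℝ) (μ : Measure ℝ) (t : ℝ) : ℝ :=
  ∫ x, max (1 - x ^ α / t ^ α) 0 ∂μ

lemma ae_ge_of_measure_Iio_eq_zero {X : Type*} [LinearOrder X] [MeasurableSpace X]
    {μ : Measure X} {a : X} (hμ : μ (Iio a) = 0) : ∀ᵐ x ∂μ, a ≤ x :=
  (measure_eq_zero_iff_ae_notMem.1 hμ).mono fun _ => notMem_Iio.1

lemma integral_integral_one_sub_mul_div {X Y : Type*} [MeasurableSpace X] [MeasurableSpace Y]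
    {μ : Measure X} {κ : Measure Y} [IsFiniteMeasure μ] [IsFiniteMeasure κ]
    {f : X → ℝ} {g : Y → ℝ} (hf : Integrable f μ) (hg : Integrable g κ) (c : ℝ) :
    ∫ y, ∫ x, (1 - f x * g y / c) ∂μ ∂κ
      = μ.real univ * κ.real univ - (∫ x, f x ∂μ) * (∫ y, g y ∂κ) / c := by
  have inner_integral (y : Y) :
      ∫ x, (1 - f x * g y / c) ∂μ = μ.real univ - (∫ x, f x ∂μ) * g y / c := by
    rw [integral_sub (integrable_const _) ((hf.mul_const _).div_const _), integral_div,
      integral_mul_const, integral_const, smul_eq_mul, mul_one]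
  simp_rw [inner_integral]
  rw [integral_sub (integrable_const _) ((hg.const_mul _).div_const _), integral_div,
    integral_const_mul, integral_const, smul_eq_mul, mul_comm (κ.real univ)]

section KendallTransform

variable {α s t : ℝ} {μ κ : Measure ℝ}

lemma max_one_sub_rpow_div_rpow_zero_eq_indicator (hα : 0 ≤ α) (ht : 0 < t) {x : ℝ} (hx : 0 ≤ x) :
    max (1 - x ^ α / t ^ α) 0 = (Iio t).indicator (fun x => 1 - x ^ α / t ^ α) x := by
  have htα : 0 < t ^ α := Real.rpow_pos_of_pos ht α
  rcases lt_or_ge x t with hxt | htx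
  · rw [indicator_of_mem (mem_Iio.2 hxt), max_eq_left]
    rw [sub_nonneg, div_le_one htα]
    exact Real.rpow_le_rpow hx hxt.le hα
  · rw [indicator_of_notMem (notMem_Iio.2 htx), max_eq_right]
    rw [sub_nonpos, one_le_div htα]
    exact Real.rpow_le_rpow ht.le htx hα

lemma integrableOn_rpow_Iio [IsFiniteMeasure μ] (hα : 0 ≤ α) (hμ : ∀ᵐ x ∂μ, 0 ≤ x) (t : ℝ) :
    IntegrableOn (fun x => x ^ α) (Iio t) μ := by
  refine Measure.integrableOn_of_bounded (M := t ^ α) (measure_ne_top _ _)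
    (Measurable.aestronglyMeasurable (by fun_prop)) ?_
  filter_upwards [ae_restrict_of_ae hμ, ae_restrict_mem measurableSet_Iio] with x hx hxt
  rw [Real.norm_of_nonneg (Real.rpow_nonneg hx α)]
  exact Real.rpow_le_rpow hx (le_of_lt hxt) hα

lemma kendallTransform_eq_measureReal_Iio_sub [IsFiniteMeasure μ] (hα : 0 ≤ α)
    (hμ : ∀ᵐ x ∂μ, 0 ≤ x) (ht : 0 < t) :
    kendallTransform α μ t = μ.real (Iio t) - (∫ x in Iio t, x ^ α ∂μ) / t ^ α :=
  calc kendallTransform α μ t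
    _ = ∫ x, (Iio t).indicator (fun x => 1 - x ^ α / t ^ α) x ∂μ :=
      integral_congr_ae <| hμ.mono fun _ => max_one_sub_rpow_div_rpow_zero_eq_indicator hα ht
    _ = ∫ x in Iio t, (1 - x ^ α / t ^ α) ∂μ := integral_indicator measurableSet_Iio
    _ = μ.real (Iio t) - (∫ x in Iio t, x ^ α ∂μ) / t ^ α := by
      rw [integral_sub (integrable_const _) ((integrableOn_rpow_Iio hα hμ t).div_const _),
        integral_div, setIntegral_const, smul_eq_mul, mul_one]

lemma setIntegral_Iio_rpow_eq_mul_sub_kendallTransform [IsFiniteMeasure μ] (hα : 0 ≤ α)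
    (hμ : ∀ᵐ x ∂μ, 0 ≤ x) (ht : 0 < t) :
    ∫ x in Iio t, x ^ α ∂μ = t ^ α * (μ.real (Iio t) - kendallTransform α μ t) := by
  rw [kendallTransform_eq_measureReal_Iio_sub hα hμ ht, sub_sub_cancel,
    mul_div_cancel₀ _ (Real.rpow_pos_of_pos ht α).ne']

theorem kendall_walk_joint_cdf_general [IsFiniteMeasure μ] [IsFiniteMeasure κ] (hα : 0 ≤ α)
    (hμ : ∀ᵐ x ∂μ, 0 ≤ x) (hκ : ∀ᵐ y ∂κ, 0 ≤ y) (hs : 0 < s) (ht : 0 < t) :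
    ∫ y in Iio s, (∫ x in Iio t, (1 - x ^ α * y ^ α / t ^ (2 * α)) ∂μ) ∂κ
      = μ.real (Iio t) * κ.real (Iio s)
        - s ^ α / t ^ α * (μ.real (Iio t) - kendallTransform α μ t)
          * (κ.real (Iio s) - kendallTransform α κ s) := by
  have htα : t ^ α ≠ 0 := (Real.rpow_pos_of_pos ht α).ne'
  have rpow_two_mul : t ^ (2 * α) = t ^ α * t ^ α := by rw [two_mul, Real.rpow_add ht]
  rw [integral_integral_one_sub_mul_div (integrableOn_rpow_Iio hα hμ t)
      (integrableOn_rpow_Iio hα hκ s),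
    setIntegral_Iio_rpow_eq_mul_sub_kendallTransform hα hμ ht,
    setIntegral_Iio_rpow_eq_mul_sub_kendallTransform hα hκ hs,
    measureReal_restrict_apply_univ, measureReal_restrict_apply_univ, rpow_two_mul]
  field_simp

end KendallTransform

/-- Joint distribution function of the Kendall random walk: for `0 < s < t`,
`P(S_{n+k} < t, S_k < s) = ∫∫ (1 - x^α y^α/t^{2α}) μ_n(dx) μ_k(dy)`
`= F_n(t) F_k(s) - (s^α/t^α)(F_n(t) - G(t)^n)(F_k(s) - G(s)^k)`. -/
theorem kendall_walk_joint_cdf (α : ℝ) (hα : 0 < α)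
    (ν : Measure ℝ) [IsProbabilityMeasure ν] (hν : ν (Set.Iio 0) = 0)
    (F : ℝ → ℝ) (hF : F = fun t => (ν (Set.Iic t)).toReal) (hFcont : Continuous F)
    (G : ℝ → ℝ) (hG : G = fun t => ∫ x, max (1 - x ^ α / t ^ α) 0 ∂ν)
    (n k : ℕ) (hn : 1 ≤ n) (hk : 1 ≤ k)
    (μn : Measure ℝ) [IsProbabilityMeasure μn] (hμn0 : μn (Set.Iio 0) = 0)
    (hμnatomless : ∀ x : ℝ, 0 < x → μn {x} = 0)
    (μk : Measure ℝ) [IsProbabilityMeasure μk] (hμk0 : μk (Set.Iio 0) = 0)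
    (hμkatomless : ∀ x : ℝ, 0 < x → μk {x} = 0)
    (Fn : ℝ → ℝ) (hFn : Fn = fun t => (μn (Set.Iic t)).toReal) (hFncont : Continuous Fn)
    (Fk : ℝ → ℝ) (hFk : Fk = fun t => (μk (Set.Iic t)).toReal) (hFkcont : Continuous Fk)
    (htrn : ∀ t : ℝ, 0 < t → ∫ x, max (1 - x ^ α / t ^ α) 0 ∂μn = (G t) ^ n)
    (htrk : ∀ t : ℝ, 0 < t → ∫ x, max (1 - x ^ α / t ^ α) 0 ∂μk = (G t) ^ k)
    (s t : ℝ) (hs : 0 < s) (hst : s < t) :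
    ∫ y in Set.Iio s, (∫ x in Set.Iio t, (1 - x ^ α * y ^ α / t ^ (2 * α)) ∂μn) ∂μk
      = Fn t * Fk s - s ^ α / t ^ α * (Fn t - (G t) ^ n) * (Fk s - (G s) ^ k) := by
  have ht : 0 < t := hs.trans hst
  have hFn_Iio : Fn t = μn.real (Set.Iio t) :=
    hFn ▸ (measureReal_congr (Iio_ae_eq_Iic' (hμnatomless t ht))).symm
  have hFk_Iio : Fk s = μk.real (Set.Iio s) :=
    hFk ▸ (measureReal_congr (Iio_ae_eq_Iic' (hμkatomless s hs))).symm
  rw [hFn_Iio, hFk_Iio, ← htrn t ht, ← htrk s hs]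
  exact kendall_walk_joint_cdf_general hα.le (ae_ge_of_measure_Iio_eq_zero hμn0)
    (ae_ge_of_measure_Iio_eq_zero hμk0) hs ht
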